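/- Fix an algebraic closure Ω of the field ℚ_2 of 2-adic numbers. There is exactly one intermediate field E of Ω over ℚ_2 such that E is a finite Galois extension of ℚ_2 whose Galois group Gal(E / ℚ_2) is isomorphic to the alternating group A_4 on four letters. -/

import Mathlib

namespace A4Q2

/-- The norm form of `ℤ[α]`, `α ^ 3 = 3 α - 1`. -/
def nm {R : Type*} [CommRing R] (p q r : R) : R :=
  p * ((p + 3 * r) ^ 2 - q * (3 * q - r)) + r * (p * q + r ^ 2) - q * (q ^ 2 - r * (p + 3 * r))

theorem dvd_iff (x : ℤ_[2]) : 2 ∣ x ↔ PadicInt.toZMod x = 0 := by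
  rw [← RingHom.mem_ker, PadicInt.ker_toZMod, PadicInt.maximalIdeal_eq_span_p,
    Ideal.mem_span_singleton]
  norm_num

theorem dvd_iff' (x : ℤ_[2]) : 2 ∣ x - 1 ↔ PadicInt.toZMod x = 1 := by
  rw [dvd_iff, map_sub, map_one, sub_eq_zero]

theorem parity (x : ℤ_[2]) : 2 ∣ x ∨ 2 ∣ x - 1 := by
  rw [dvd_iff, dvd_iff']
  generalize PadicInt.toZMod x = y
  revert y; decide

theorem not_dvd_one : ¬ (2 : ℤ_[2]) ∣ 1 := by
  rw [dvd_iff]; simp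

theorem dvd_sq {x : ℤ_[2]} (h : 2 ∣ x ^ 2) : 2 ∣ x := by
  rw [dvd_iff] at *; simpa using h

theorem norm_lt_of_dvd {x : ℤ_[2]} (h : 2 ∣ x) : ‖x‖ < 1 := by
  have := (PadicInt.norm_lt_one_iff_dvd (p := 2) x)
  rw [this]; exact_mod_cast h

theorem norm_eq_of_not_dvd {x : ℤ_[2]} (h : ¬ 2 ∣ x) : ‖x‖ = 1 := by
  refine le_antisymm (PadicInt.norm_le_one x) (not_lt.1 fun h' => h ?_)
  rw [(PadicInt.norm_lt_one_iff_dvd (p := 2) x)] at h'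
  exact_mod_cast h'

theorem two_ne : (2 : ℤ_[2]) ≠ 0 := two_ne_zero

theorem toZMod_three : PadicInt.toZMod (3 : ℤ_[2]) = 1 := by
  have : (3 : ℤ_[2]) = 1 + 1 + 1 := by norm_num
  rw [this, map_add, map_add, map_one]; decide

theorem coe_three : ((3 : ℤ_[2]) : ℚ_[2]) = 3 := rfl

theorem nm_odd (p q r : ℤ_[2]) (h : 2 ∣ nm p q r) : 2 ∣ p ∧ 2 ∣ q ∧ 2 ∣ r := by
  simp only [dvd_iff] at *
  have : nm (PadicInt.toZMod p) (PadicInt.toZMod q) (PadicInt.toZMod r) = 0 := by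
    rw [← h]
    have : (3 : ZMod 2) = 1 := by decide
    simp [nm, toZMod_three, this]
  revert this
  generalize PadicInt.toZMod p = p
  generalize PadicInt.toZMod q = q
  generalize PadicInt.toZMod r = r
  revert p q r
  unfold nm
  decide

theorem hensel1 (t : ℤ_[2]) (h : 2 ∣ t) : ∃ u : ℤ_[2], 9 * (u ^ 2 - u) = t * (u ^ 3 - 3 * u + 1) := by
  open Polynomial in
  obtain ⟨z, hz, -⟩ := hensels_lemma (p := 2) (R := ℤ_[2])
    (F := 9 * (X ^ 2 - X) - C t * (X ^ 3 - 3 * X + 1)) (a := 0) (by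
      have h1 : ‖t‖ < 1 := norm_lt_of_dvd h
      have h2 : ‖-9 - t * (-3)‖ = 1 := by
        apply norm_eq_of_not_dvd
        intro h3
        have h4 : (2 : ℤ_[2]) ∣ 1 := by
          have := dvd_add h3 (dvd_mul_of_dvd_right h (-3))
          have h5 : (2 : ℤ_[2]) ∣ 10 := ⟨5, by norm_num⟩
          have := dvd_add this h5
          ring_nf at this
          exact this
        exact not_dvd_one h4
      have e1 : (aeval (0 : ℤ_[2])) (9 * (X ^ 2 - X) - C t * (X ^ 3 - 3 * X + 1)) = -t := by
        simp
      have e2 : (aeval (0 : ℤ_[2])) (derivative (9 * (X ^ 2 - X) - C t * (X ^ 3 - 3 * X + 1)))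
          = -9 - t * (-3) := by
        simp
      rw [e1, e2, h2, norm_neg]; simpa using h1)
  refine ⟨z, ?_⟩
  simp at hz
  linear_combination hz

theorem hensel2 (s : ℤ_[2]) (h : 2 ∣ s) :
    ∃ x : ℤ_[2], s * x ^ 3 - x ^ 2 + (1 - 3 * s) * x + s = 0 := by
  open Polynomial in
  obtain ⟨z, hz, -⟩ := hensels_lemma (p := 2) (R := ℤ_[2])
    (F := C s * X ^ 3 - X ^ 2 + C (1 - 3 * s) * X + C s) (a := 0) (by
      have h1 : ‖s‖ < 1 := norm_lt_of_dvd h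
      have h2 : ‖1 - 3 * s‖ = 1 := by
        apply norm_eq_of_not_dvd
        intro h3
        have h4 : (2 : ℤ_[2]) ∣ 1 := by
          have := dvd_add h3 (dvd_mul_of_dvd_right h (3))
          ring_nf at this
          exact this
        exact not_dvd_one h4
      have e1 : (aeval (0 : ℤ_[2])) (C s * X ^ 3 - X ^ 2 + C (1 - 3 * s) * X + C s) = s := by
        simp
      have e2 : (aeval (0 : ℤ_[2])) (derivative (C s * X ^ 3 - X ^ 2 + C (1 - 3 * s) * X + C s))
          = 1 - 3 * s := by
        simp
      rw [e1, e2, h2]; simpa using h1)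
  refine ⟨z, ?_⟩
  simp at hz
  linear_combination hz

theorem cases_padic (t : ℚ_[2]) : (∃ s : ℤ_[2], (s : ℚ_[2]) = t) ∨
    (t ≠ 0 ∧ ∃ s : ℤ_[2], 2 ∣ s ∧ (s : ℚ_[2]) = t⁻¹) := by
  by_cases h : ‖t‖ ≤ 1
  · exact Or.inl ⟨⟨t, h⟩, rfl⟩
  · right
    push Not at h
    have h0 : t ≠ 0 := by rintro rfl; norm_num at h
    have h1 : ‖t⁻¹‖ < 1 := by rw [norm_inv]; exact inv_lt_one_of_one_lt₀ h
    refine ⟨h0, ⟨t⁻¹, h1.le⟩, ?_, rfl⟩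
    have := (PadicInt.norm_lt_one_iff_dvd (p := 2) (⟨t⁻¹, h1.le⟩)).1 h1
    exact_mod_cast this

theorem no_root_quad (z : ℚ_[2]) : z ^ 2 - z + 1 ≠ 0 := by
  intro h
  rcases cases_padic z with ⟨s, rfl⟩ | ⟨h0, s, hs, hz⟩
  · have h : s ^ 2 - s + 1 = 0 := by
      apply Subtype.coe_injective; push_cast; exact h
    have := congrArg PadicInt.toZMod h
    simp [toZMod_three] at this
  · have h : 1 - (s : ℚ_[2]) + s ^ 2 = 0 := by
      rw [hz]; field_simp; linear_combination h
    have h : 1 - s + s ^ 2 = 0 := by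
      apply Subtype.coe_injective; push_cast; exact h
    have := congrArg PadicInt.toZMod h
    simp [toZMod_three] at this

theorem no_root_cubic (z : ℚ_[2]) : z ^ 3 - 3 * z + 1 ≠ 0 := by
  intro h
  rcases cases_padic z with ⟨s, rfl⟩ | ⟨h0, s, hs, hz⟩
  · have h : s ^ 3 - 3 * s + 1 = 0 := by
      apply Subtype.coe_injective; push_cast; rw [coe_three]; exact h
    have := congrArg PadicInt.toZMod h
    simp [toZMod_three] at this
    revert this
    generalize PadicInt.toZMod s = y
    revert y; decide
  · have h : 1 - 3 * (s : ℚ_[2]) ^ 2 + s ^ 3 = 0 := by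
      rw [hz]; field_simp; linear_combination h
    have h : 1 - 3 * s ^ 2 + s ^ 3 = 0 := by
      apply Subtype.coe_injective; push_cast; rw [coe_three]; exact h
    have := congrArg PadicInt.toZMod h
    simp [toZMod_three] at this
    revert this
    generalize PadicInt.toZMod s = y
    revert y; decide

theorem norm_aux {d a b c x y z : ℤ_[2]} (h : d = 2 * (a * x + b * y + c * z)) :
    ‖d‖ ≤ 2⁻¹ * max ‖x‖ (max ‖y‖ ‖z‖) := by
  have h2 : ‖(2 : ℤ_[2])‖ = 2⁻¹ := by
    have := PadicInt.norm_p (p := 2); exact_mod_cast this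
  rw [h, norm_mul, h2]
  gcongr
  have k : ∀ a x : ℤ_[2], ‖a * x‖ ≤ ‖x‖ := fun a x => by
    rw [norm_mul]; exact mul_le_of_le_one_left (norm_nonneg _) (PadicInt.norm_le_one a)
  refine (PadicInt.nonarchimedean _ _).trans (max_le ((PadicInt.nonarchimedean _ _).trans ?_) ?_)
  · exact max_le ((k _ _).trans (le_max_left _ _))
      ((k _ _).trans ((le_max_left _ _).trans (le_max_right _ _)))
  · exact (k _ _).trans ((le_max_right _ _).trans (le_max_right _ _))

/-- Newton step in coordinates: solve `z = w - 2 (y z + z ^ 2)` in `ℤ_2[α]`. -/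
theorem fixed_point (w₀ w₁ w₂ y₀ y₁ y₂ : ℤ_[2]) : ∃ p q r : ℤ_[2],
    p = w₀ - 2 * ((y₀ * p - (y₁ * r + y₂ * q)) + (p ^ 2 - 2 * q * r)) ∧
    q = w₁ - 2 * ((y₀ * q + y₁ * p + 3 * (y₁ * r + y₂ * q) - y₂ * r)
      + (2 * p * q + 6 * q * r - r ^ 2)) ∧
    r = w₂ - 2 * ((y₀ * r + y₁ * q + y₂ * p + 3 * (y₂ * r)) + (q ^ 2 + 2 * p * r + 3 * r ^ 2)) := by
  let T : ℤ_[2] × ℤ_[2] × ℤ_[2] → ℤ_[2] × ℤ_[2] × ℤ_[2] := fun z =>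
    (w₀ - 2 * ((y₀ * z.1 - (y₁ * z.2.2 + y₂ * z.2.1)) + (z.1 ^ 2 - 2 * z.2.1 * z.2.2)),
     w₁ - 2 * ((y₀ * z.2.1 + y₁ * z.1 + 3 * (y₁ * z.2.2 + y₂ * z.2.1) - y₂ * z.2.2)
      + (2 * z.1 * z.2.1 + 6 * z.2.1 * z.2.2 - z.2.2 ^ 2)),
     w₂ - 2 * ((y₀ * z.2.2 + y₁ * z.2.1 + y₂ * z.1 + 3 * (y₂ * z.2.2))
      + (z.2.1 ^ 2 + 2 * z.1 * z.2.2 + 3 * z.2.2 ^ 2)))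
  have hT : ContractingWith 2⁻¹ T := by
    refine ⟨by rw [← NNReal.coe_lt_coe]; norm_num, LipschitzWith.of_dist_le_mul ?_⟩
    rintro ⟨p, q, r⟩ ⟨p', q', r'⟩
    rw [dist_eq_norm, dist_eq_norm]
    have key : ‖((p, q, r) : ℤ_[2] × ℤ_[2] × ℤ_[2]) - (p', q', r')‖
        = max ‖p - p'‖ (max ‖q - q'‖ ‖r - r'‖) := by
      simp [Prod.norm_def]
    rw [key]
    have hc : (((2⁻¹ : NNReal)) : ℝ) = 2⁻¹ := by norm_num
    rw [hc, Prod.norm_def, Prod.norm_def]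
    refine max_le ?_ (max_le ?_ ?_)
    · refine norm_aux (a := -y₀ - (p + p')) (b := y₂ + 2 * r) (c := y₁ + 2 * q') ?_
      simp only [T, Prod.fst_sub, Prod.snd_sub]; ring
    · refine norm_aux (a := - y₁ - 2 * q) (b := -y₀ - 3 * y₂ - 2 * p' - 6 * r)
        (c := -3 * y₁ + y₂ - 6 * q' + r + r') ?_
      simp only [T, Prod.fst_sub, Prod.snd_sub]; ring
    · refine norm_aux (a := - y₂ - 2 * r) (b := -y₁ - q - q')
        (c := -y₀ - 3 * y₂ - 2 * p' - 3 * (r + r')) ?_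
      simp only [T, Prod.fst_sub, Prod.snd_sub]; ring
  obtain ⟨⟨p, q, r⟩, hz, -⟩ := hT.exists_fixedPoint (0 : ℤ_[2] × ℤ_[2] × ℤ_[2]) (edist_ne_top _ _)
  have hz : T (p, q, r) = (p, q, r) := hz
  simp only [T, Prod.mk.injEq] at hz
  exact ⟨p, q, r, hz.1.symm, hz.2.1.symm, hz.2.2.symm⟩

end A4Q2

namespace A4Q2

/-- Coordinates of a product in `ℤ[α]`. -/
def m0 {R : Type*} [CommRing R] (x₀ x₁ x₂ y₀ y₁ y₂ : R) : R := x₀ * y₀ - (x₁ * y₂ + x₂ * y₁)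
/-- Coordinates of a product in `ℤ[α]`. -/
def m1 {R : Type*} [CommRing R] (x₀ x₁ x₂ y₀ y₁ y₂ : R) : R :=
  x₀ * y₁ + x₁ * y₀ + 3 * (x₁ * y₂ + x₂ * y₁) - x₂ * y₂
/-- Coordinates of a product in `ℤ[α]`. -/
def m2 {R : Type*} [CommRing R] (x₀ x₁ x₂ y₀ y₁ y₂ : R) : R :=
  x₀ * y₂ + x₁ * y₁ + x₂ * y₀ + 3 * (x₂ * y₂)

theorem nm_mul {R : Type*} [CommRing R] (x₀ x₁ x₂ y₀ y₁ y₂ : R) :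
    nm (m0 x₀ x₁ x₂ y₀ y₁ y₂) (m1 x₀ x₁ x₂ y₀ y₁ y₂) (m2 x₀ x₁ x₂ y₀ y₁ y₂)
      = nm x₀ x₁ x₂ * nm y₀ y₁ y₂ := by
  unfold nm m0 m1 m2; ring

/-- The element `p + q α + r α ^ 2`. -/
def el {R E : Type*} [CommRing R] [CommRing E] (φ : R →+* E) (α : E) (p q r : R) : E :=
  φ p + φ q * α + φ r * α ^ 2

theorem el_mul {R E : Type*} [CommRing R] [CommRing E] (φ : R →+* E) (α : E)
    (hα : α ^ 3 = 3 * α - 1) (x₀ x₁ x₂ y₀ y₁ y₂ : R) :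
    el φ α x₀ x₁ x₂ * el φ α y₀ y₁ y₂ =
    el φ α (m0 x₀ x₁ x₂ y₀ y₁ y₂) (m1 x₀ x₁ x₂ y₀ y₁ y₂) (m2 x₀ x₁ x₂ y₀ y₁ y₂) := by
  unfold el m0 m1 m2
  simp only [map_add, map_sub, map_mul, map_ofNat]
  linear_combination ((φ x₁ * φ y₂ + φ x₂ * φ y₁) + φ x₂ * φ y₂ * α) * hα

theorem el_nm {R E : Type*} [CommRing R] [CommRing E] (φ : R →+* E) (α : E)
    (hα : α ^ 3 = 3 * α - 1) (p q r : R) : el φ α p q r *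
      el φ α ((p + 3 * r) ^ 2 - q * (3 * q - r)) (-(p * q + r ^ 2)) (q ^ 2 - r * (p + 3 * r))
      = φ (nm p q r) := by
  rw [el_mul φ α hα]
  have h1 : m1 p q r ((p + 3 * r) ^ 2 - q * (3 * q - r)) (-(p * q + r ^ 2))
    (q ^ 2 - r * (p + 3 * r)) = 0 := by unfold m1; ring
  have h2 : m2 p q r ((p + 3 * r) ^ 2 - q * (3 * q - r)) (-(p * q + r ^ 2))
    (q ^ 2 - r * (p + 3 * r)) = 0 := by unfold m2; ring
  have h0 : m0 p q r ((p + 3 * r) ^ 2 - q * (3 * q - r)) (-(p * q + r ^ 2))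
    (q ^ 2 - r * (p + 3 * r)) = nm p q r := by unfold m0 nm; ring
  rw [h0, h1, h2]; simp [el]

theorem sq_add_even (x : ℤ_[2]) : ∃ m, x + x ^ 2 = 2 * m := by
  rcases parity x with ⟨y, hy⟩ | ⟨y, hy⟩
  · exact ⟨y + 2 * y ^ 2, by rw [hy]; ring⟩
  · rw [sub_eq_iff_eq_add] at hy
    exact ⟨1 + 3 * y + 2 * y ^ 2, by rw [hy]; ring⟩

theorem stepC {E : Type*} [CommRing E] (φ : ℤ_[2] →+* E) (α : E)
    (hα : α ^ 3 = 3 * α - 1) (w₀ w₁ w₂ n : ℤ_[2]) (h : nm (1 + 4 * w₀) (4 * w₁) (4 * w₂) = n ^ 2) :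
    ∃ k₀ k₁ k₂, 1 + 4 * el φ α w₀ w₁ w₂ = el φ α k₀ k₁ k₂ ^ 2 := by
  obtain ⟨a, ha⟩ : 2 ∣ w₀ := by
    have hn : nm (1 + 4 * w₀) (4 * w₁) (4 * w₂) = 1 + 4 * (3 * w₀ + 6 * w₂)
      + 16 * (2 * (w₀ * (w₀ + 3 * w₂) + w₁ * w₂) + (w₀ + 3 * w₂) ^ 2 - w₁ * (3 * w₁ - w₂))
      + 64 * nm w₀ w₁ w₂ := by unfold nm; ring
    generalize (2 * (w₀ * (w₀ + 3 * w₂) + w₁ * w₂) + (w₀ + 3 * w₂) ^ 2 - w₁ * (3 * w₁ - w₂)) = S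
      at hn
    generalize nm w₀ w₁ w₂ = N at hn
    rw [h] at hn
    rcases parity n with ⟨j, hj⟩ | ⟨j, hj⟩
    · exfalso
      refine not_dvd_one ⟨2 * j ^ 2 - 2 * (3 * w₀ + 6 * w₂) - 8 * S - 32 * N, ?_⟩
      rw [hj] at hn
      linear_combination -hn
    · rw [sub_eq_iff_eq_add] at hj
      obtain ⟨l, hl⟩ := sq_add_even j
      rw [hj] at hn
      refine ⟨l - w₀ - 3 * w₂ - 2 * S - 8 * N, ?_⟩
      apply mul_left_cancel₀ (by norm_num : (4 : ℤ_[2]) ≠ 0)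
      linear_combination -hn + 4 * hl
  obtain ⟨b, hb⟩ := sq_add_even w₁
  obtain ⟨c, hc⟩ := sq_add_even w₂
  obtain ⟨z₀, z₁, z₂, h0, h1, h2⟩ := fixed_point (a + w₂ * (w₁ + w₂))
    (b + c - w₂ + w₁ * w₂ - 3 * w₂ * (w₁ + w₂)) (-b - w₁ ^ 2 - 3 * w₁ * w₂ - 2 * w₂ ^ 2)
    0 w₂ (w₁ + w₂)
  refine ⟨1 + 4 * z₀, 2 * w₂ + 4 * z₁, 2 * (w₁ + w₂) + 4 * z₂, ?_⟩
  rw [sq, el_mul φ α hα]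
  have e0 : 1 + 4 * w₀ = m0 (1 + 4 * z₀) (2 * w₂ + 4 * z₁) (2 * (w₁ + w₂) + 4 * z₂)
      (1 + 4 * z₀) (2 * w₂ + 4 * z₁) (2 * (w₁ + w₂) + 4 * z₂) := by
    unfold m0
    linear_combination -8 * h0 + 4 * ha
  have e1 : 4 * w₁ = m1 (1 + 4 * z₀) (2 * w₂ + 4 * z₁) (2 * (w₁ + w₂) + 4 * z₂)
      (1 + 4 * z₀) (2 * w₂ + 4 * z₁) (2 * (w₁ + w₂) + 4 * z₂) := by
    unfold m1
    linear_combination -8 * h1 + 4 * hb + 4 * hc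
  have e2 : 4 * w₂ = m2 (1 + 4 * z₀) (2 * w₂ + 4 * z₁) (2 * (w₁ + w₂) + 4 * z₂)
      (1 + 4 * z₀) (2 * w₂ + 4 * z₁) (2 * (w₁ + w₂) + 4 * z₂) := by
    unfold m2
    linear_combination -8 * h2 - 4 * hb
  rw [← e0, ← e1, ← e2]
  simp only [el, map_add, map_mul, map_ofNat, map_one]
  ring

theorem stepA (p q r : ℤ_[2]) (h : ¬ (2 ∣ p ∧ 2 ∣ q ∧ 2 ∣ r)) : ∃ s₀ s₁ s₂ v₀ v₁ v₂,
    m0 p q r (m0 s₀ s₁ s₂ s₀ s₁ s₂) (m1 s₀ s₁ s₂ s₀ s₁ s₂) (m2 s₀ s₁ s₂ s₀ s₁ s₂) = 1 + 2 * v₀ ∧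
    m1 p q r (m0 s₀ s₁ s₂ s₀ s₁ s₂) (m1 s₀ s₁ s₂ s₀ s₁ s₂) (m2 s₀ s₁ s₂ s₀ s₁ s₂) = 2 * v₁ ∧
    m2 p q r (m0 s₀ s₁ s₂ s₀ s₁ s₂) (m1 s₀ s₁ s₂ s₀ s₁ s₂) (m2 s₀ s₁ s₂ s₀ s₁ s₂) = 2 * v₂ := by
  have key : ∀ p q r : ZMod 2, ¬ (p = 0 ∧ q = 0 ∧ r = 0) → ∃ s₀ s₁ s₂,
    m0 p q r (m0 s₀ s₁ s₂ s₀ s₁ s₂) (m1 s₀ s₁ s₂ s₀ s₁ s₂) (m2 s₀ s₁ s₂ s₀ s₁ s₂) = 1 ∧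
    m1 p q r (m0 s₀ s₁ s₂ s₀ s₁ s₂) (m1 s₀ s₁ s₂ s₀ s₁ s₂) (m2 s₀ s₁ s₂ s₀ s₁ s₂) = 0 ∧
    m2 p q r (m0 s₀ s₁ s₂ s₀ s₁ s₂) (m1 s₀ s₁ s₂ s₀ s₁ s₂) (m2 s₀ s₁ s₂ s₀ s₁ s₂) = 0 := by
    unfold m0 m1 m2
    decide
  simp only [dvd_iff] at h
  obtain ⟨s₀, s₁, s₂, h0, h1, h2⟩ := key _ _ _ h
  have surj : Function.Surjective (PadicInt.toZMod (p := 2)) := ZMod.ringHom_surjective _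
  obtain ⟨s₀, rfl⟩ := surj s₀
  obtain ⟨s₁, rfl⟩ := surj s₁
  obtain ⟨s₂, rfl⟩ := surj s₂
  have three : (3 : ZMod 2) = 1 := by decide
  have d0 : 2 ∣ m0 p q r (m0 s₀ s₁ s₂ s₀ s₁ s₂) (m1 s₀ s₁ s₂ s₀ s₁ s₂) (m2 s₀ s₁ s₂ s₀ s₁ s₂) - 1 := by
    rw [dvd_iff', ← h0]
    simp only [m0, m1, m2, map_add, map_sub, map_mul, toZMod_three, three]
  have d1 : 2 ∣ m1 p q r (m0 s₀ s₁ s₂ s₀ s₁ s₂) (m1 s₀ s₁ s₂ s₀ s₁ s₂) (m2 s₀ s₁ s₂ s₀ s₁ s₂) := by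
    rw [dvd_iff, ← h1]
    simp only [m0, m1, m2, map_add, map_sub, map_mul, toZMod_three, three]
  have d2 : 2 ∣ m2 p q r (m0 s₀ s₁ s₂ s₀ s₁ s₂) (m1 s₀ s₁ s₂ s₀ s₁ s₂) (m2 s₀ s₁ s₂ s₀ s₁ s₂) := by
    rw [dvd_iff, ← h2]
    simp only [m0, m1, m2, map_add, map_sub, map_mul, toZMod_three, three]
  obtain ⟨v₀, d0⟩ := d0
  obtain ⟨v₁, d1⟩ := d1
  obtain ⟨v₂, d2⟩ := d2
  exact ⟨s₀, s₁, s₂, v₀, v₁, v₂, by linear_combination d0, d1, d2⟩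

/-- common end of the case distinction -/
theorem stepB {E : Type*} [CommRing E] (φ : ℤ_[2] →+* E) (α : E)
    (hα : α ^ 3 = 3 * α - 1) (v₀ v₁ v₂ n a₀ a₁ a₂ : ℤ_[2])
    (h : nm (1 + 2 * v₀) (2 * v₁) (2 * v₂) = n ^ 2) (l : ℤ_[2])
    (h' : nm (1 + 2 * a₀) (2 * a₁) (2 * a₂) = l ^ 2)
    (h0 : 2 ∣ v₀ + a₀) (h1 : 2 ∣ v₁ + a₁) (h2 : 2 ∣ v₂ + a₂) :
    ∃ k₀ k₁ k₂, (1 + 2 * el φ α v₀ v₁ v₂) * (1 + 2 * el φ α a₀ a₁ a₂) = el φ α k₀ k₁ k₂ ^ 2 := by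
  obtain ⟨b₀, h0⟩ := h0
  obtain ⟨b₁, h1⟩ := h1
  obtain ⟨b₂, h2⟩ := h2
  obtain ⟨k₀, k₁, k₂, hk⟩ := stepC φ α hα (b₀ + m0 v₀ v₁ v₂ a₀ a₁ a₂) (b₁ + m1 v₀ v₁ v₂ a₀ a₁ a₂)
    (b₂ + m2 v₀ v₁ v₂ a₀ a₁ a₂) (n * l) (by
      rw [mul_pow, ← h, ← h', ← nm_mul]
      congr 1
      · unfold m0; linear_combination -2 * h0
      · unfold m1; linear_combination -2 * h1
      · unfold m2; linear_combination -2 * h2)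
  refine ⟨k₀, k₁, k₂, ?_⟩
  rw [← hk]
  have e : el φ α (b₀ + m0 v₀ v₁ v₂ a₀ a₁ a₂) (b₁ + m1 v₀ v₁ v₂ a₀ a₁ a₂)
    (b₂ + m2 v₀ v₁ v₂ a₀ a₁ a₂) = el φ α b₀ b₁ b₂ + el φ α v₀ v₁ v₂ * el φ α a₀ a₁ a₂ := by
    rw [el_mul φ α hα]; simp only [el, map_add]; ring
  have e' : el φ α v₀ v₁ v₂ + el φ α a₀ a₁ a₂ = 2 * el φ α b₀ b₁ b₂ := by
    have h0 := congrArg φ h0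
    have h1 := congrArg φ h1
    have h2 := congrArg φ h2
    simp only [map_add, map_mul, map_ofNat] at h0 h1 h2
    unfold el
    linear_combination h0 + h1 * α + h2 * α ^ 2
  rw [e]
  linear_combination 2 * e'

theorem primitive {E : Type*} [CommRing E] (φ : ℤ_[2] →+* E) (α : E)
    (hα : α ^ 3 = 3 * α - 1) (p q r n : ℤ_[2]) (h : ¬ (2 ∣ p ∧ 2 ∣ q ∧ 2 ∣ r))
    (hn : nm p q r = n ^ 2) : ∃ c : E, (c = 1 ∨ c = -α ∨ c = 2 - α ^ 2 ∨ c = α ^ 2 + α - 2) ∧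
      ∃ s₀ s₁ s₂ k₀ k₁ k₂, nm s₀ s₁ s₂ ≠ 0 ∧
        el φ α p q r * c * el φ α s₀ s₁ s₂ ^ 2 = el φ α k₀ k₁ k₂ ^ 2 := by
  obtain ⟨s₀, s₁, s₂, v₀, v₁, v₂, h0, h1, h2⟩ := stepA p q r h
  have hv : nm (1 + 2 * v₀) (2 * v₁) (2 * v₂) = (n * nm s₀ s₁ s₂) ^ 2 := by
    rw [← h0, ← h1, ← h2, nm_mul, nm_mul, hn]; ring
  have hX : el φ α p q r * el φ α s₀ s₁ s₂ ^ 2 = 1 + 2 * el φ α v₀ v₁ v₂ := by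
    rw [sq, el_mul φ α hα, el_mul φ α hα, h0, h1, h2]
    simp only [el, map_add, map_mul, map_ofNat, map_one]
    ring
  have hexp : nm (1 + 2 * v₀) (2 * v₁) (2 * v₂) = 1 + 2 * (3 * v₀ + 6 * v₂)
      + 4 * (2 * (v₀ * (v₀ + 3 * v₂) + v₁ * v₂) + (v₀ + 3 * v₂) ^ 2 - v₁ * (3 * v₁ - v₂))
      + 8 * nm v₀ v₁ v₂ := by unfold nm; ring
  have hodd : ¬ 2 ∣ n * nm s₀ s₁ s₂ := by
    rintro ⟨j, hj⟩
    rw [hv, hj] at hexp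
    generalize (2 * (v₀ * (v₀ + 3 * v₂) + v₁ * v₂) + (v₀ + 3 * v₂) ^ 2 - v₁ * (3 * v₁ - v₂)) = S
      at hexp
    refine not_dvd_one ⟨2 * j ^ 2 - (3 * v₀ + 6 * v₂) - 2 * S - 4 * nm v₀ v₁ v₂, ?_⟩
    linear_combination -hexp
  have hs : nm s₀ s₁ s₂ ≠ 0 := by
    intro h; apply hodd; rw [h]; simp
  have hv0 : 2 ∣ v₀ := by
    obtain ⟨j, hj⟩ := (parity (n * nm s₀ s₁ s₂)).resolve_left hodd
    rw [sub_eq_iff_eq_add] at hj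
    rw [hv, hj] at hexp
    generalize (2 * (v₀ * (v₀ + 3 * v₂) + v₁ * v₂) + (v₀ + 3 * v₂) ^ 2 - v₁ * (3 * v₁ - v₂)) = S
      at hexp
    generalize nm v₀ v₁ v₂ = N at hexp
    refine ⟨j + j ^ 2 - v₀ - 3 * v₂ - S - 2 * N, ?_⟩
    apply mul_left_cancel₀ (two_ne_zero : (2 : ℤ_[2]) ≠ 0)
    linear_combination -hexp
  have fin : ∀ (c : E) (b₀ b₁ b₂ a₀ a₁ a₂ : ℤ_[2]), nm b₀ b₁ b₂ ≠ 0 → 2 ∣ a₀ →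
      2 ∣ v₁ + a₁ → 2 ∣ v₂ + a₂ → nm (1 + 2 * a₀) (2 * a₁) (2 * a₂) = nm b₀ b₁ b₂ ^ 2 →
      c * el φ α b₀ b₁ b₂ ^ 2 = 1 + 2 * el φ α a₀ a₁ a₂ →
      ∃ s₀ s₁ s₂ k₀ k₁ k₂, nm s₀ s₁ s₂ ≠ 0 ∧
        el φ α p q r * c * el φ α s₀ s₁ s₂ ^ 2 = el φ α k₀ k₁ k₂ ^ 2 := by
    intro c b₀ b₁ b₂ a₀ a₁ a₂ hb ha0 ha1 ha2 hnm hc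
    obtain ⟨k₀, k₁, k₂, hk⟩ := stepB φ α hα v₀ v₁ v₂ _ a₀ a₁ a₂ hv _ hnm (dvd_add hv0 ha0) ha1 ha2
    refine ⟨m0 s₀ s₁ s₂ b₀ b₁ b₂, m1 s₀ s₁ s₂ b₀ b₁ b₂, m2 s₀ s₁ s₂ b₀ b₁ b₂,
      k₀, k₁, k₂, ?_, ?_⟩
    rotate_left
    · rw [← hk, ← hX, ← hc]
      trans el φ α p q r * c * (el φ α s₀ s₁ s₂ * el φ α b₀ b₁ b₂) ^ 2
      · rw [el_mul φ α hα]
      · ring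
    · rw [nm_mul]; exact mul_ne_zero hs hb
  have n3 : (3 : ℤ_[2]) ≠ 0 := by norm_num
  rcases parity v₁ with e1 | e1 <;> rcases parity v₂ with e2 | e2
  · refine ⟨1, by simp, fin 1 1 0 0 0 0 0 ?_ ?_ ?_ ?_ ?_ ?_⟩
    · simp [nm]
    · simp
    · simpa using e1
    · simpa using e2
    · simp [nm]
    · simp [el]
  · refine ⟨-α, by simp, fin (-α) 1 1 0 0 (-2) (-1) ?_ ?_ ?_ ?_ ?_ ?_⟩
    · have : nm (1 : ℤ_[2]) 1 0 = -3 := by unfold nm; norm_num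
      rw [this]; exact neg_ne_zero.2 n3
    · simp
    · exact dvd_add e1 ⟨-1, by ring⟩
    · simpa [sub_eq_add_neg] using e2
    · unfold nm; norm_num
    · simp only [el, map_zero, map_one, map_neg, map_ofNat]
      linear_combination -hα
  · refine ⟨α ^ 2 + α - 2, by simp, fin _ 3 (-1) (-1) (-6) 1 2 ?_ ?_ ?_ ?_ ?_ ?_⟩
    · have : nm (3 : ℤ_[2]) (-1) (-1) = -3 := by unfold nm; norm_num
      rw [this]; exact neg_ne_zero.2 n3
    · exact ⟨-3, by norm_num⟩
    · have := dvd_add e1 ⟨1, (mul_one (2 : ℤ_[2])).symm⟩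
      ring_nf at this ⊢; exact this
    · exact dvd_add e2 ⟨1, by ring⟩
    · unfold nm; norm_num
    · simp only [el, map_zero, map_one, map_neg, map_ofNat]
      linear_combination (α ^ 3 + 3 * α ^ 2 - 2 * α - 7) * hα
  · refine ⟨2 - α ^ 2, by simp, fin _ (-1) 0 1 0 1 (-1) ?_ ?_ ?_ ?_ ?_ ?_⟩
    · have : nm (-1 : ℤ_[2]) 0 1 = -3 := by unfold nm; norm_num
      rw [this]; exact neg_ne_zero.2 n3
    · simp
    · have := dvd_add e1 ⟨1, (mul_one (2 : ℤ_[2])).symm⟩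
      ring_nf at this ⊢; exact this
    · simpa [sub_eq_add_neg] using e2
    · unfold nm; norm_num
    · simp only [el, map_zero, map_one, map_neg, map_ofNat]
      linear_combination (-α ^ 3 + α + 1) * hα

theorem core {E : Type*} [CommRing E] (φ : ℤ_[2] →+* E) (α : E)
    (hα : α ^ 3 = 3 * α - 1) (N : ℕ) : ∀ (p q r n : ℤ_[2]), n ≠ 0 → n.valuation = N →
    nm p q r = n ^ 2 → ∃ c : E, (c = 1 ∨ c = -α ∨ c = 2 - α ^ 2 ∨ c = α ^ 2 + α - 2) ∧
      ∃ s₀ s₁ s₂ k₀ k₁ k₂, nm s₀ s₁ s₂ ≠ 0 ∧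
        el φ α p q r * c * el φ α s₀ s₁ s₂ ^ 2 = el φ α k₀ k₁ k₂ ^ 2 := by
  induction N using Nat.strong_induction_on with
  | _ N ih =>
  intro p q r n hn0 hN hn
  by_cases h : 2 ∣ p ∧ 2 ∣ q ∧ 2 ∣ r
  · obtain ⟨⟨p, rfl⟩, ⟨q, rfl⟩, ⟨r, rfl⟩⟩ := h
    have h8 : 8 * nm p q r = n ^ 2 := by rw [← hn]; unfold nm; ring
    obtain ⟨n, rfl⟩ : 2 ∣ n := dvd_sq ⟨4 * nm p q r, by rw [← h8]; ring⟩
    have h2 : 2 * nm p q r = n ^ 2 := by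
      apply mul_left_cancel₀ (by norm_num : (4 : ℤ_[2]) ≠ 0); linear_combination h8
    obtain ⟨n, rfl⟩ : 2 ∣ n := dvd_sq ⟨_, h2.symm⟩
    have h2 : nm p q r = 2 * n ^ 2 := by
      apply mul_left_cancel₀ (two_ne_zero : (2 : ℤ_[2]) ≠ 0); linear_combination h2
    obtain ⟨⟨p, rfl⟩, ⟨q, rfl⟩, ⟨r, rfl⟩⟩ := nm_odd p q r ⟨_, h2⟩
    have h4 : 4 * nm p q r = n ^ 2 := by
      apply mul_left_cancel₀ (two_ne_zero : (2 : ℤ_[2]) ≠ 0); rw [← h2]; unfold nm; ring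
    obtain ⟨n, rfl⟩ : 2 ∣ n := dvd_sq ⟨2 * nm p q r, by rw [← h4]; ring⟩
    have h1 : nm p q r = n ^ 2 := by
      apply mul_left_cancel₀ (by norm_num : (4 : ℤ_[2]) ≠ 0); linear_combination h4
    have hn' : n ≠ 0 := by rintro rfl; simp at hn0
    have hval : n.valuation < N := by
      rw [← hN]
      have v2 : (2 : ℤ_[2]).valuation = 1 := by
        have := PadicInt.valuation_p (p := 2); exact_mod_cast this
      have t : (2 : ℤ_[2]) ≠ 0 := two_ne_zero
      rw [PadicInt.valuation_mul t (by simpa using hn'), PadicInt.valuation_mul t (by simpa using hn'),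
        PadicInt.valuation_mul t hn', v2]
      omega
    obtain ⟨c, hc, s₀, s₁, s₂, k₀, k₁, k₂, hs, hk⟩ := ih _ hval p q r n hn' rfl h1
    refine ⟨c, hc, s₀, s₁, s₂, 2 * k₀, 2 * k₁, 2 * k₂, hs, ?_⟩
    have e1 : el φ α (2 * (2 * p)) (2 * (2 * q)) (2 * (2 * r)) = 4 * el φ α p q r := by
      simp only [el, map_mul, map_ofNat]; ring
    have e2 : el φ α (2 * k₀) (2 * k₁) (2 * k₂) = 2 * el φ α k₀ k₁ k₂ := by
      simp only [el, map_mul, map_ofNat]; ring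
    rw [e1, e2]
    linear_combination 4 * hk
  · exact primitive φ α hα p q r n h hn

end A4Q2

namespace A4Q2

theorem exists_denom (x : ℚ_[2]) : ∃ d y : ℤ_[2], d ≠ 0 ∧ (d : ℚ_[2]) * x = y := by
  rcases cases_padic x with ⟨s, rfl⟩ | ⟨h0, s, hs, hz⟩
  · exact ⟨1, s, one_ne_zero, by simp⟩
  · refine ⟨s, 1, ?_, ?_⟩
    · rintro rfl
      simp at hz
      exact h0 hz.symm
    · rw [hz]; simp [h0]

theorem el_comp {R S E : Type*} [CommRing R] [CommRing S] [CommRing E] (f : R →+* S) (φ : S →+* E)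
    (α : E) (p q r : R) : el (φ.comp f) α p q r = el φ α (f p) (f q) (f r) := rfl

theorem map_nm {R S : Type*} [CommRing R] [CommRing S] (f : R →+* S) (p q r : R) :
    f (nm p q r) = nm (f p) (f q) (f r) := by
  simp only [nm, map_add, map_sub, map_mul, map_pow, map_ofNat]

theorem coreQ {E : Type*} [Field E] [Algebra ℚ_[2] E] (α : E) (hα : α ^ 3 = 3 * α - 1)
    (p q r n : ℚ_[2]) (hn0 : n ≠ 0) (hn : nm p q r = n ^ 2) :
    ∃ c : E, (c = 1 ∨ c = -α ∨ c = 2 - α ^ 2 ∨ c = α ^ 2 + α - 2) ∧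
      ∃ κ : E, el (algebraMap ℚ_[2] E) α p q r * c = κ ^ 2 ∧
        ∀ τ : E ≃ₐ[ℚ_[2]] E, τ α = α → τ κ = κ := by
  obtain ⟨d₁, p₁, hd₁, hp₁⟩ := exists_denom p
  obtain ⟨d₂, q₁, hd₂, hq₁⟩ := exists_denom q
  obtain ⟨d₃, r₁, hd₃, hr₁⟩ := exists_denom r
  let ι : ℤ_[2] →+* ℚ_[2] := PadicInt.Coe.ringHom
  have hι : ∀ x : ℤ_[2], ι x = (x : ℚ_[2]) := fun x => rfl
  have ιinj : Function.Injective ι := Subtype.coe_injective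
  set d := d₁ * d₂ * d₃ with hd
  have hd0 : d ≠ 0 := mul_ne_zero (mul_ne_zero hd₁ hd₂) hd₃
  have eP : ι (d * d₂ * d₃ * p₁) = ι d ^ 2 * p := by
    have h' : ι d₁ * p = ι p₁ := hp₁
    simp only [hd, map_mul]; linear_combination -(ι d₁ * ι d₂^2 * ι d₃^2) * h'
  have eQ : ι (d * d₁ * d₃ * q₁) = ι d ^ 2 * q := by
    have h' : ι d₂ * q = ι q₁ := hq₁
    simp only [hd, map_mul]; linear_combination -(ι d₁^2 * ι d₂ * ι d₃^2) * h'
  have eR : ι (d * d₁ * d₂ * r₁) = ι d ^ 2 * r := by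
    have h' : ι d₃ * r = ι r₁ := hr₁
    simp only [hd, map_mul]; linear_combination -(ι d₁^2 * ι d₂^2 * ι d₃) * h'
  have hnm : ι (nm (d * d₂ * d₃ * p₁) (d * d₁ * d₃ * q₁) (d * d₁ * d₂ * r₁)) = (ι d ^ 3 * n) ^ 2 := by
    rw [map_nm, eP, eQ, eR, mul_pow, ← hn]
    unfold nm; ring
  have hint : ‖ι d ^ 3 * n‖ ≤ 1 := by
    have h1 : ‖(ι d ^ 3 * n) ^ 2‖ ≤ 1 := by rw [← hnm]; exact PadicInt.norm_le_one _
    rw [norm_pow] at h1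
    exact (sq_le_one_iff₀ (norm_nonneg _)).1 h1
  obtain ⟨m, hm⟩ : ∃ m : ℤ_[2], ι m = ι d ^ 3 * n := ⟨⟨_, hint⟩, rfl⟩
  have hιd : ι d ≠ 0 := by rw [Ne, map_eq_zero_iff ι ιinj]; exact hd0
  have hm0 : m ≠ 0 := by
    intro h
    rw [h, map_zero] at hm
    exact mul_ne_zero (pow_ne_zero 3 hιd) hn0 hm.symm
  rw [← hm, ← map_pow] at hnm
  obtain ⟨c, hc, s₀, s₁, s₂, k₀, k₁, k₂, hs, hk⟩ := core ((algebraMap ℚ_[2] E).comp ι) α hα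
    m.valuation _ _ _ m hm0 rfl (ιinj hnm)
  rw [el_comp, eP, eQ, eR] at hk
  set S := el ((algebraMap ℚ_[2] E).comp ι) α s₀ s₁ s₂ with hS
  set K := el ((algebraMap ℚ_[2] E).comp ι) α k₀ k₁ k₂ with hK
  have hfix : ∀ (τ : E ≃ₐ[ℚ_[2]] E), τ α = α → ∀ x₀ x₁ x₂ : ℤ_[2],
      τ (el ((algebraMap ℚ_[2] E).comp ι) α x₀ x₁ x₂)
        = el ((algebraMap ℚ_[2] E).comp ι) α x₀ x₁ x₂ := by
    intro τ hτ x₀ x₁ x₂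
    simp [el, hτ]
  have hS0 : S ≠ 0 := by
    intro h
    have := el_nm ((algebraMap ℚ_[2] E).comp ι) α hα s₀ s₁ s₂
    rw [← hS, h, zero_mul] at this
    exact hs (((algebraMap ℚ_[2] E).injective.comp ιinj) (by
      have h2 := this.symm
      simpa using h2))
  have hD0 : algebraMap ℚ_[2] E (ι d) ≠ 0 := by
    rw [Ne, map_eq_zero_iff _ (algebraMap ℚ_[2] E).injective]; exact hιd
  refine ⟨c, hc, K / (algebraMap ℚ_[2] E (ι d) * S), ?_, ?_⟩
  · rw [div_pow, ← hk]
    field_simp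
    simp only [el, map_mul, map_pow]
    ring
  · intro τ hτ
    rw [map_div₀, map_mul, hK, hS, hfix τ hτ, hfix τ hτ, AlgEquiv.commutes]

theorem cubic {E : Type*} [Field E] [Algebra ℚ_[2] E] (x : E) (t : ℚ_[2])
    (hx : ∀ y, algebraMap ℚ_[2] E y ≠ x)
    (h : x ^ 3 - algebraMap ℚ_[2] E t * x ^ 2 + (algebraMap ℚ_[2] E t - 3) * x + 1 = 0) :
    ∃ α : E, α ^ 3 = 3 * α - 1 ∧ ∀ τ : E ≃ₐ[ℚ_[2]] E, τ x = x → τ α = α := by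
  have even : ∀ (x : E) (s : ℤ_[2]), (∀ y, algebraMap ℚ_[2] E y ≠ x) → 2 ∣ s →
      x ^ 3 - algebraMap ℚ_[2] E s * x ^ 2 + (algebraMap ℚ_[2] E s - 3) * x + 1 = 0 →
      ∃ α : E, α ^ 3 = 3 * α - 1 ∧ ∀ τ : E ≃ₐ[ℚ_[2]] E, τ x = x → τ α = α := by
    intro x s hx hs h
    obtain ⟨u, hu⟩ := hensel1 s hs
    have hu := congrArg (fun z : ℤ_[2] => algebraMap ℚ_[2] E (PadicInt.Coe.ringHom z)) hu
    simp only [map_add, map_sub, map_mul, map_pow, map_ofNat, map_one] at hu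
    change x ^ 3 - algebraMap ℚ_[2] E (PadicInt.Coe.ringHom s) * x ^ 2 +
      (algebraMap ℚ_[2] E (PadicInt.Coe.ringHom s) - 3) * x + 1 = 0 at h
    have hne : x + algebraMap ℚ_[2] E (PadicInt.Coe.ringHom u) - 1 ≠ 0 := by
      intro h0
      apply hx (1 - PadicInt.Coe.ringHom u)
      rw [map_sub, map_one]; linear_combination -h0
    refine ⟨(algebraMap ℚ_[2] E (PadicInt.Coe.ringHom u) * x - 1) /
      (x + algebraMap ℚ_[2] E (PadicInt.Coe.ringHom u) - 1), ?_, ?_⟩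
    · set U := algebraMap ℚ_[2] E (PadicInt.Coe.ringHom u)
      set T := algebraMap ℚ_[2] E (PadicInt.Coe.ringHom s)
      field_simp
      linear_combination (U ^ 3 - 3 * U + 1) * h - (x ^ 2 - x) * hu
    · intro τ hτ
      simp [hτ]
  have hx0 : x ≠ 0 := fun h0 => hx 0 (by rw [h0, map_zero])
  rcases cases_padic t with ⟨s, rfl⟩ | ⟨h0, s, hs, hz⟩
  · rcases parity s with hs | hs
    · exact even x s hx hs h
    · obtain ⟨α, h1, h2⟩ := even x⁻¹ (3 - s) (fun y hy => hx y⁻¹ (by rw [map_inv₀, hy, inv_inv]))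
        (by
          obtain ⟨j, hj⟩ := hs
          exact ⟨1 - j, by linear_combination -hj⟩)
        (by
          have : algebraMap ℚ_[2] E ((3 - s : ℤ_[2]) : ℚ_[2]) = 3 - algebraMap ℚ_[2] E s := by
            have h3 : ((3 - s : ℤ_[2]) : ℚ_[2]) = 3 - s := by rw [PadicInt.coe_sub, coe_three]
            rw [h3, map_sub, map_ofNat]
          rw [this]
          field_simp
          linear_combination h)
      exact ⟨α, h1, fun τ hτ => h2 τ (by rw [map_inv₀, hτ])⟩
  · exfalso
    obtain ⟨ρ, hρ⟩ := hensel2 s hs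
    have hρ := congrArg (fun z : ℤ_[2] => algebraMap ℚ_[2] E (PadicInt.Coe.ringHom z)) hρ
    simp only [map_add, map_sub, map_mul, map_pow, map_ofNat, map_one, map_zero] at hρ
    have hz' : algebraMap ℚ_[2] E (PadicInt.Coe.ringHom s) * algebraMap ℚ_[2] E t = 1 := by
      rw [← map_mul]
      change algebraMap ℚ_[2] E ((s : ℚ_[2]) * t) = 1
      rw [hz, inv_mul_cancel₀ h0, map_one]
    set T := algebraMap ℚ_[2] E t with hT
    set S := algebraMap ℚ_[2] E (PadicInt.Coe.ringHom s)
    set P := algebraMap ℚ_[2] E (PadicInt.Coe.ringHom ρ) with hP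
    have hρ' : P ^ 3 - T * P ^ 2 + (T - 3) * P + 1 = 0 := by
      linear_combination T * hρ + (-P ^ 3 + 3 * P - 1) * hz'
    have h1 : x - P ≠ 0 := fun h' => hx (PadicInt.Coe.ringHom ρ) (by rw [← hP]; linear_combination -h')
    have hP1 : P - 1 ≠ 0 := by
      intro h'
      have : P = 1 := by linear_combination h'
      rw [this] at hρ'
      have : (-1 : E) = 0 := by linear_combination hρ'
      simp at this
    have hP0 : P ≠ 0 := by
      intro h'
      rw [h'] at hρ'
      simp at hρ'
    have h2 : P * x - (P - 1) ≠ 0 := by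
      intro h'
      apply hx ((PadicInt.Coe.ringHom ρ - 1) / PadicInt.Coe.ringHom ρ)
      rw [map_div₀, map_sub, map_one, ← hP]
      field_simp; linear_combination -h'
    have h3 : (P - 1) * x + 1 ≠ 0 := by
      intro h'
      apply hx (-1 / (PadicInt.Coe.ringHom ρ - 1))
      rw [map_div₀, map_sub, map_neg, map_one, ← hP]
      field_simp; linear_combination -h'
    apply mul_ne_zero (mul_ne_zero h1 h2) h3
    linear_combination (P ^ 2 - P) * h - (x ^ 2 - x) * hρ'

end A4Q2

namespace A4Q2

theorem vieta3 {E : Type*} [Field E] (k α β γ : E) (ha : α ^ 3 = 3 * α + k)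
    (hb : β ^ 3 = 3 * β + k) (hc : γ ^ 3 = 3 * γ + k) (hab : α ≠ β) (hbc : β ≠ γ) (hca : γ ≠ α) :
    α + β + γ = 0 ∧ α * β + β * γ + γ * α = -3 ∧ α * β * γ = k := by
  have h1 : α ^ 2 + α * β + β ^ 2 = 3 := by
    apply mul_left_cancel₀ (sub_ne_zero.2 hab); linear_combination ha - hb
  have h2 : α ^ 2 + α * γ + γ ^ 2 = 3 := by
    apply mul_left_cancel₀ (sub_ne_zero.2 hca); linear_combination hc - ha
  have h3 : α + β + γ = 0 := by
    apply mul_left_cancel₀ (sub_ne_zero.2 hbc); linear_combination h1 - h2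
  have h4 : α * β + β * γ + γ * α = -3 := by
    linear_combination (α + β) * h3 - h1
  exact ⟨h3, h4, by linear_combination ha + α * h4 - α ^ 2 * h3⟩

section
variable {E : Type*} [Field E] [Algebra ℚ_[2] E] (v1 v2 σ : E ≃ₐ[ℚ_[2]] E)

/-- The hypotheses on three automorphisms generating a copy of the alternating group. -/
structure Setup : Prop where
  h11 : ∀ z, v1 (v1 z) = z
  h22 : ∀ z, v2 (v2 z) = z
  h12 : ∀ z, v1 (v2 z) = v2 (v1 z)
  h3 : ∀ z, σ (σ (σ z)) = z
  hs1 : ∀ z, σ (v1 z) = v2 (σ z)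
  hs2 : ∀ z, σ (v2 z) = v1 (v2 (σ z))
  hfix : ∀ z, v1 z = z → v2 z = z → σ z = z → ∃ y, algebraMap ℚ_[2] E y = z

variable {v1 v2 σ}

theorem Setup.v2σ (H : Setup v1 v2 σ) (z : E) : v2 (σ z) = σ (v1 z) := (H.hs1 z).symm
theorem Setup.v1σ (H : Setup v1 v2 σ) (z : E) : v1 (σ z) = σ (v1 (v2 z)) := by
  rw [H.hs1, H.hs2, ← H.h12, H.h22]

theorem Setup.trace (H : Setup v1 v2 σ) (z : E) (h1 : v1 z = z) (h2 : v2 z = z) :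
    ∃ y, algebraMap ℚ_[2] E y = z + σ z + σ (σ z) := by
  apply H.hfix
  · simp only [map_add, H.v1σ, H.v2σ, h1, h2]
  · simp only [map_add, H.v1σ, H.v2σ, h1, h2]
  · simp only [map_add, H.h3]; ring

theorem Setup.exists_alpha (H : Setup v1 v2 σ) (a : E) (h1 : v1 a = a) (h2 : v2 a = a)
    (h3 : σ a ≠ a) : ∃ α : E, α ^ 3 = 3 * α - 1 ∧ v1 α = α ∧ v2 α = α := by
  set y := a - σ a with hy
  have hy0 : y ≠ 0 := sub_ne_zero.2 (Ne.symm h3)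
  have hsy0 : σ y ≠ 0 := by simpa using hy0
  have htr : y + σ y + σ (σ y) = 0 := by simp only [hy, map_sub, H.h3]; ring
  have hvy1 : v1 y = y := by simp only [hy, map_sub, H.v1σ, h1, h2]
  have hvy2 : v2 y = y := by simp only [hy, map_sub, H.v2σ, h1, h2]
  set x := - σ y / y with hx
  have hvx1 : v1 x = x := by simp only [hx, map_div₀, map_neg, H.v1σ, hvy1, hvy2]
  have hvx2 : v2 x = x := by simp only [hx, map_div₀, map_neg, H.v2σ, hvy1, hvy2]
  have hx0 : x ≠ 0 := div_ne_zero (neg_ne_zero.2 hsy0) hy0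
  have hsx : σ x = 1 - 1 / x := by
    have : σ (σ y) = - y - σ y := by linear_combination htr
    rw [hx, map_div₀, map_neg, this]
    field_simp
    ring
  have hsx0 : σ x ≠ 0 := by simpa using hx0
  have hssx : σ (σ x) = 1 - 1 / σ x := by
    have := congrArg σ hsx
    simpa using this
  have hx1 : x - 1 ≠ 0 := by
    intro h
    apply hsx0
    rw [hsx]; field_simp; simpa using h
  have hnx : ∀ z, algebraMap ℚ_[2] E z ≠ x := by
    intro z hz
    have h5 : σ x = x := by rw [← hz, AlgEquiv.commutes]
    rw [h5] at hsx
    field_simp at hsx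
    apply no_root_quad z
    apply (algebraMap ℚ_[2] E).injective
    simp only [map_add, map_sub, map_pow, map_one, map_zero, hz]
    linear_combination hsx
  obtain ⟨t, ht⟩ := H.trace x hvx1 hvx2
  obtain ⟨α, ha, hτ⟩ := cubic x t hnx (by
    rw [ht, hssx, hsx]
    have : 1 - 1 / x ≠ 0 := by rw [← hsx]; exact hsx0
    field_simp
    ring)
  exact ⟨α, ha, hτ v1 hvx1, hτ v2 hvx2⟩

theorem Setup.conj_ne (H : Setup v1 v2 σ) (b : E) (h1 : v1 b = b) (h2 : v2 b = b)
    (hb : ∀ y, algebraMap ℚ_[2] E y ≠ b) : b ≠ σ b ∧ σ b ≠ σ (σ b) ∧ σ (σ b) ≠ b := by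
  have h : σ b ≠ b := fun h => by
    obtain ⟨y, hy⟩ := H.hfix b h1 h2 h
    exact hb y hy
  refine ⟨h.symm, fun h' => h (σ.injective h').symm, fun h' => h ?_⟩
  conv_rhs => rw [← H.h3 b, h']

theorem Setup.coords (H : Setup v1 v2 σ) (a α : E) (h1 : v1 a = a) (h2 : v2 a = a)
    (ha1 : v1 α = α) (ha2 : v2 α = α) (hα : α ^ 3 = 3 * α - 1)
    (h : α + σ α + σ (σ α) = 0) (h' : α * σ α + σ α * σ (σ α) + σ (σ α) * α = -3)
    (hn1 : α ≠ σ α) (hn2 : σ (σ α) ≠ α)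
    (n : ℚ_[2]) (hn : a * σ a * σ (σ a) = (algebraMap ℚ_[2] E n) ^ 2) :
    ∃ p q r : ℚ_[2], a = el (algebraMap ℚ_[2] E) α p q r ∧ nm p q r = n ^ 2 := by
  have hD : 3 * α ^ 2 - 3 = (α - σ α) * (α - σ (σ α)) := by
    linear_combination 2 * α * h - h'
  have hD0 : 3 * α ^ 2 - 3 ≠ 0 := by
    rw [hD]; exact mul_ne_zero (sub_ne_zero.2 hn1) (sub_ne_zero.2 hn2.symm)
  set A := a / (3 * α ^ 2 - 3) with hA
  have hAa : A * (3 * α ^ 2 - 3) = a := by rw [hA, div_mul_cancel₀ _ hD0]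
  have hA1 : v1 A = A := by simp only [hA, map_div₀, map_sub, map_mul, map_pow, map_ofNat, h1, ha1]
  have hA2 : v2 A = A := by simp only [hA, map_div₀, map_sub, map_mul, map_pow, map_ofNat, h2, ha2]
  obtain ⟨r, hr⟩ := H.trace A hA1 hA2
  obtain ⟨q, hq⟩ := H.trace (A * α) (by rw [map_mul, hA1, ha1]) (by rw [map_mul, hA2, ha2])
  obtain ⟨p, hp⟩ := H.trace (A * (α ^ 2 - 3))
    (by simp only [map_mul, map_sub, map_pow, map_ofNat, hA1, ha1])
    (by simp only [map_mul, map_sub, map_pow, map_ofNat, hA2, ha2])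
  simp only [map_mul, map_sub, map_pow, map_ofNat] at hp hq hr
  have e : a = el (algebraMap ℚ_[2] E) α p q r := by
    rw [el, hp, hq, hr, ← hAa]
    linear_combination (-(σ A) * (σ α + α) - σ (σ A) * (σ (σ α) + α)) * h + (σ A + σ (σ A)) * h'
  refine ⟨p, q, r, e, ?_⟩
  apply (algebraMap ℚ_[2] E).injective
  rw [← el_nm (algebraMap ℚ_[2] E) α hα, ← e, map_pow, ← hn, mul_assoc]
  congr 1
  rw [e]
  simp only [el, map_add, map_mul, map_sub, map_pow, map_neg, map_ofNat, AlgEquiv.commutes]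
  set P := algebraMap ℚ_[2] E p
  set Q := algebraMap ℚ_[2] E q
  set R := algebraMap ℚ_[2] E r
  have s1 : σ α + σ (σ α) = -α := by linear_combination h
  have s2 : σ α * σ (σ α) = α ^ 2 - 3 := by linear_combination h' - α * h
  generalize σ (σ α) = γ at *
  have s3 : γ = - α - σ α := by linear_combination s1
  generalize σ α = β at *
  have s4 : β ^ 2 + γ ^ 2 = 6 - α ^ 2 := by linear_combination (β + γ - α) * s1 - 2 * s2
  have s5 : β * γ * (β + γ) = 1 := by rw [s1, s2]; linear_combination -hα
  have s6 : (β * γ) ^ 2 = 9 - α - 3 * α ^ 2 := by rw [s2]; linear_combination α * hα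
  linear_combination -P * Q * s1 - P * R * s4 - Q ^ 2 * s2 - Q * R * s5 - R ^ 2 * s6

theorem Setup.main (H : Setup v1 v2 σ) (f : E) (hf1 : v1 f = f) (hf2 : v2 f ≠ f) :
    ∃ d₁ d₂ d₃ : E, d₁ ^ 2 + d₂ ^ 2 + d₃ ^ 2 = 0 ∧
      d₁ ^ 2 * d₂ ^ 2 + d₂ ^ 2 * d₃ ^ 2 + d₃ ^ 2 * d₁ ^ 2 = -3 ∧ d₁ * d₂ * d₃ = 1 := by
  have : CharZero E := charZero_of_injective_algebraMap (algebraMap ℚ_[2] E).injective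
  set e := f - v2 f with he
  have e1 : v1 e = e := by simp only [he, map_sub, H.h12, hf1]
  have e2 : v2 e = -e := by simp only [he, map_sub, H.h22]; ring
  have e0 : e ≠ 0 := sub_ne_zero.2 hf2.symm
  have se0 : σ e ≠ 0 := by simpa using e0
  have sse0 : σ (σ e) ≠ 0 := by simpa using e0
  have se1 : v1 (σ e) = - σ e := by rw [H.v1σ, e2, map_neg, map_neg, e1]
  have se2 : v2 (σ e) = σ e := by rw [H.v2σ, e1]
  have sse1 : v1 (σ (σ e)) = - σ (σ e) := by rw [H.v1σ, se2, se1, map_neg]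
  have sse2 : v2 (σ (σ e)) = - σ (σ e) := by rw [H.v2σ, se1, map_neg]
  have ha1 : v1 (e ^ 2) = e ^ 2 := by rw [map_pow, e1]
  have ha2 : v2 (e ^ 2) = e ^ 2 := by rw [map_pow, e2]; ring
  have has : σ (e ^ 2) ≠ e ^ 2 := by
    intro h
    rw [map_pow, sq_eq_sq_iff_eq_or_eq_neg] at h
    rcases h with h | h <;> rw [h] at se2 <;> simp only [map_neg, e2] at se2
    · exact e0 (self_eq_neg.1 se2.symm)
    · exact e0 (self_eq_neg.1 (by rw [neg_neg] at se2; exact se2))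
  obtain ⟨n, hn⟩ := H.hfix (e * σ e * σ (σ e)) (by simp only [map_mul, e1, se1, sse1]; ring)
    (by simp only [map_mul, e2, se2, sse2]; ring) (by simp only [map_mul, H.h3]; ring)
  have hn0 : n ≠ 0 := by
    rintro rfl
    rw [map_zero] at hn
    exact mul_ne_zero (mul_ne_zero e0 se0) sse0 hn.symm
  obtain ⟨α, hα, hv1, hv2⟩ := H.exists_alpha (e ^ 2) ha1 ha2 has
  have hαn : ∀ y, algebraMap ℚ_[2] E y ≠ α := by
    rintro y rfl
    apply no_root_cubic y
    apply (algebraMap ℚ_[2] E).injective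
    simp only [map_add, map_sub, map_mul, map_pow, map_ofNat, map_one, map_zero]
    linear_combination hα
  obtain ⟨n1, n2, n3⟩ := H.conj_ne α hv1 hv2 hαn
  have hα2 : σ α ^ 3 = 3 * σ α - 1 := by
    have := congrArg σ hα
    simpa only [map_sub, map_mul, map_pow, map_ofNat, map_one] using this
  have hα3 : σ (σ α) ^ 3 = 3 * σ (σ α) - 1 := by
    have := congrArg σ hα2
    simpa only [map_sub, map_mul, map_pow, map_ofNat, map_one] using this
  obtain ⟨w1, w2, -⟩ := vieta3 (-1) α (σ α) (σ (σ α)) (by linear_combination hα)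
    (by linear_combination hα2) (by linear_combination hα3) n1 n2 n3
  obtain ⟨p, q, r, ha, hnm⟩ := H.coords (e ^ 2) α ha1 ha2 hv1 hv2 hα w1 w2 n1 n3 n (by
    rw [hn]; simp only [map_pow]; ring)
  obtain ⟨c, hc, κ, hκ, hτ⟩ := coreQ α hα p q r n hn0 hnm
  rw [← ha] at hκ
  have κ1 := hτ v1 hv1
  have κ2 := hτ v2 hv2
  have hc1 : c ≠ 1 := by
    rintro rfl
    rw [mul_one, sq_eq_sq_iff_eq_or_eq_neg] at hκ
    rcases hκ with h | h <;> rw [h] at e2 <;> simp only [map_neg, κ2] at e2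
    · exact e0 (by rw [h]; exact self_eq_neg.1 e2)
    · exact e0 (by rw [h]; exact self_eq_neg.1 e2)
  have hcc : c ^ 3 = 3 * c + 1 := by
    rcases hc with h | h | h | h
    · exact absurd h hc1
    · rw [h]; linear_combination -hα
    · rw [h]; linear_combination (-α ^ 3 + 6 * α ^ 1 - 3 * α + 1) * hα
    · rw [h]; linear_combination (α ^ 3 + 3 * α ^ 2 - 3) * hα
  have hcv1 : v1 c = c := by
    rcases hc with h | h | h | h <;> simp only [h, map_add, map_sub, map_neg, map_pow, map_ofNat, map_one, hv1]
  have hcv2 : v2 c = c := by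
    rcases hc with h | h | h | h <;> simp only [h, map_add, map_sub, map_neg, map_pow, map_ofNat, map_one, hv2]
  have hcn : ∀ y, algebraMap ℚ_[2] E y ≠ c := by
    rintro y rfl
    apply no_root_cubic (-y)
    apply (algebraMap ℚ_[2] E).injective
    simp only [map_add, map_sub, map_neg, map_mul, map_pow, map_ofNat, map_one, map_zero]
    linear_combination -hcc
  obtain ⟨m1, m2, m3⟩ := H.conj_ne c hcv1 hcv2 hcn
  have hc2 : σ c ^ 3 = 3 * σ c + 1 := by
    have := congrArg σ hcc
    simpa only [map_add, map_mul, map_pow, map_ofNat, map_one] using this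
  have hc3 : σ (σ c) ^ 3 = 3 * σ (σ c) + 1 := by
    have := congrArg σ hc2
    simpa only [map_add, map_mul, map_pow, map_ofNat, map_one] using this
  obtain ⟨u1, u2, u3⟩ := vieta3 1 c (σ c) (σ (σ c)) hcc hc2 hc3 m1 m2 m3
  set d := κ / e with hd
  have hdc : d ^ 2 = c := by rw [hd, div_pow, ← hκ]; field_simp
  have hdc2 : σ d ^ 2 = σ c := by rw [← map_pow, hdc]
  have hdc3 : σ (σ d) ^ 2 = σ (σ c) := by rw [← map_pow, hdc2]
  have hp : (d * σ d * σ (σ d)) ^ 2 = 1 ^ 2 := by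
    rw [mul_pow, mul_pow, hdc, hdc2, hdc3, u3, one_pow]
  rcases sq_eq_sq_iff_eq_or_eq_neg.1 hp with h | h
  · exact ⟨d, σ d, σ (σ d), by rw [hdc, hdc2, hdc3, u1], by rw [hdc, hdc2, hdc3, u2], h⟩
  · refine ⟨-d, -σ d, -σ (σ d), ?_, ?_, ?_⟩
    · simp only [neg_sq]; rw [hdc, hdc2, hdc3, u1]
    · simp only [neg_sq]; rw [hdc, hdc2, hdc3, u2]
    · linear_combination -h

end
end A4Q2

namespace A4Q2

def pV1 : alternatingGroup (Fin 4) := ⟨Equiv.swap 0 1 * Equiv.swap 2 3, Equiv.Perm.mem_alternatingGroup.2 (by decide)⟩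
def pV2 : alternatingGroup (Fin 4) := ⟨Equiv.swap 0 2 * Equiv.swap 1 3, Equiv.Perm.mem_alternatingGroup.2 (by decide)⟩
def pS : alternatingGroup (Fin 4) := ⟨Equiv.swap 1 2 * Equiv.swap 2 3, Equiv.Perm.mem_alternatingGroup.2 (by decide)⟩

theorem p11 : pV1 * pV1 = 1 := by decide
theorem p22 : pV2 * pV2 = 1 := by decide
theorem p12 : pV1 * pV2 = pV2 * pV1 := by decide
theorem p3 : pS * (pS * pS) = 1 := by decide
theorem ps1 : pS * pV1 = pV2 * pS := by decide
theorem ps2 : pS * pV2 = pV1 * (pV2 * pS) := by decide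
theorem pn : pV2 ≠ 1 ∧ pV2 ≠ pV1 := by decide
theorem pgen : ∀ g : alternatingGroup (Fin 4), ∃ (i : Fin 3) (j k : Fin 2),
    g = pS ^ i.val * (pV1 ^ j.val * pV2 ^ k.val) := by decide +kernel

theorem exists_d {E : Type*} [Field E] [Algebra ℚ_[2] E] [FiniteDimensional ℚ_[2] E]
    [IsGalois ℚ_[2] E] (φ : (E ≃ₐ[ℚ_[2]] E) ≃* alternatingGroup (Fin 4)) :
    ∃ d₁ d₂ d₃ : E, d₁ ^ 2 + d₂ ^ 2 + d₃ ^ 2 = 0 ∧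
      d₁ ^ 2 * d₂ ^ 2 + d₂ ^ 2 * d₃ ^ 2 + d₃ ^ 2 * d₁ ^ 2 = -3 ∧ d₁ * d₂ * d₃ = 1 := by
  set v1 := φ.symm pV1 with hv1
  set v2 := φ.symm pV2 with hv2
  set σ := φ.symm pS with hσ
  have q11 : v1 * v1 = 1 := by rw [hv1, ← map_mul, p11, map_one]
  have q22 : v2 * v2 = 1 := by rw [hv2, ← map_mul, p22, map_one]
  have q12 : v1 * v2 = v2 * v1 := by rw [hv1, hv2, ← map_mul, p12, map_mul]
  have q3 : σ * (σ * σ) = 1 := by rw [hσ, ← map_mul, ← map_mul, p3, map_one]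
  have qs1 : σ * v1 = v2 * σ := by rw [hσ, hv1, hv2, ← map_mul, ps1, map_mul]
  have qs2 : σ * v2 = v1 * (v2 * σ) := by rw [hσ, hv1, hv2, ← map_mul, ps2, map_mul, map_mul]
  have H : Setup v1 v2 σ := by
    refine ⟨fun z => DFunLike.congr_fun q11 z, fun z => DFunLike.congr_fun q22 z,
      fun z => DFunLike.congr_fun q12 z, fun z => DFunLike.congr_fun q3 z,
      fun z => DFunLike.congr_fun qs1 z, fun z => DFunLike.congr_fun qs2 z, ?_⟩
    intro z h1 h2 h3
    have hh := (IsGalois.mem_range_algebraMap_iff_fixed (F := ℚ_[2]) (E := E) z).2 ?_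
    · exact hh
    intro g
    have key : φ.symm.toMonoidHom.range ≤ MulAction.stabilizer (E ≃ₐ[ℚ_[2]] E) z := by
      rintro _ ⟨g, rfl⟩
      obtain ⟨i, j, k, rfl⟩ := pgen g
      change φ.symm _ ∈ _
      simp only [map_mul, map_pow]
      exact mul_mem (pow_mem (show _ from h3) _) (mul_mem (pow_mem (show _ from h1) _)
        (pow_mem (show _ from h2) _))
    exact key ⟨φ g, φ.symm_apply_apply g⟩
  have : ∃ f, v1 f = f ∧ v2 f ≠ f := by
    by_contra! hcon
    have h1 : v2 ∈ IntermediateField.fixingSubgroup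
        (IntermediateField.fixedField (Subgroup.zpowers v1)) := by
      rw [IntermediateField.mem_fixingSubgroup_iff]
      intro x hx
      apply hcon
      rw [IntermediateField.mem_fixedField_iff] at hx
      exact hx v1 (Subgroup.mem_zpowers v1)
    rw [IntermediateField.fixingSubgroup_fixedField, Subgroup.mem_zpowers_iff] at h1
    obtain ⟨k, hk⟩ := h1
    have hk' : pV1 ^ k = pV2 := by
      have := congrArg φ hk
      simpa [hv1, hv2] using this
    rcases Int.even_or_odd' k with ⟨j, rfl | rfl⟩
    · rw [zpow_mul, zpow_two, p11, one_zpow] at hk'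
      exact pn.1 hk'.symm
    · rw [zpow_add, zpow_mul, zpow_two, p11, one_zpow, one_mul, zpow_one] at hk'
      exact pn.2 hk'.symm
  obtain ⟨f, hf1, hf2⟩ := this
  exact H.main f hf1 hf2

end A4Q2

namespace A4Q2
open Polynomial

theorem eis_irr : Irreducible (X ^ 4 + C 2 * X ^ 3 + C 6 * X ^ 2 + C 4 * X + C 2 : ℤ_[2][X]) := by
  set g := (X ^ 4 + C 2 * X ^ 3 + C 6 * X ^ 2 + C 4 * X + C 2 : ℤ_[2][X]) with hg
  have hdeg : g.natDegree = 4 := by rw [hg]; compute_degree!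
  have hmon : g.Monic := by rw [hg]; monicity!
  have hP : (Ideal.span {(2 : ℤ_[2])}).IsPrime := by
    have := PadicInt.prime_p (p := 2)
    rw [Ideal.span_singleton_prime two_ne_zero]
    exact_mod_cast this
  have h2 : ∀ k : ℤ_[2], 2 * k ∈ Ideal.span {(2 : ℤ_[2])} := fun k =>
    Ideal.mem_span_singleton.2 ⟨k, rfl⟩
  apply IsEisensteinAt.irreducible (𝓟 := Ideal.span {2}) _ hP hmon.isPrimitive (by omega)
  refine ⟨?_, ?_, ?_⟩
  · rw [hmon.leadingCoeff, Ideal.mem_span_singleton]; exact not_dvd_one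
  · intro n hn
    rw [hdeg] at hn
    rw [Ideal.mem_span_singleton]
    interval_cases n
    · exact ⟨1, by simp [hg, coeff_X, coeff_X_pow, coeff_C]⟩
    · exact ⟨2, by simp [hg, coeff_X, coeff_X_pow, coeff_C]; norm_num⟩
    · exact ⟨3, by simp [hg, coeff_X, coeff_X_pow, coeff_C]; norm_num⟩
    · exact ⟨1, by simp [hg, coeff_X, coeff_X_pow, coeff_C]⟩
  · have : g.coeff 0 = 2 := by simp [hg, coeff_X, coeff_X_pow, coeff_C]
    rw [this, Ideal.span_singleton_pow, Ideal.mem_span_singleton]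
    rintro ⟨k, hk⟩
    apply not_dvd_one
    refine ⟨k, ?_⟩
    apply mul_left_cancel₀ (two_ne_zero (α := ℤ_[2]))
    linear_combination hk

theorem eis_irrQ : Irreducible (X ^ 4 + C 2 * X ^ 3 + C 6 * X ^ 2 + C 4 * X + C 2 : ℚ_[2][X]) := by
  have hmon : (X ^ 4 + C 2 * X ^ 3 + C 6 * X ^ 2 + C 4 * X + C 2 : ℤ_[2][X]).Monic := by monicity!
  have := (hmon.irreducible_iff_irreducible_map_fraction_map (K := ℚ_[2])).1 eis_irr
  simpa only [Polynomial.map_add, Polynomial.map_mul, Polynomial.map_pow, map_X, map_C, map_ofNat, Polynomial.map_ofNat]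
    using this

theorem cub_irr : Irreducible (X ^ 3 - C 3 * X - C 1 : ℚ_[2][X]) := by
  have hdeg : (X ^ 3 - C 3 * X - C 1 : ℚ_[2][X]).natDegree = 3 := by compute_degree!
  have hmon : (X ^ 3 - C 3 * X - C 1 : ℚ_[2][X]).Monic := by monicity!
  rw [hmon.irreducible_iff_roots_eq_zero_of_degree_le_three (by omega) (by omega)]
  rw [Multiset.eq_zero_iff_forall_notMem]
  intro y hy
  rw [mem_roots hmon.ne_zero, IsRoot] at hy
  simp at hy
  exact no_root_cubic (-y) (by linear_combination -hy)

theorem dvd3 {E : Type*} [Field E] [Algebra ℚ_[2] E] [FiniteDimensional ℚ_[2] E] (c : E)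
    (hc : c ^ 3 = 3 * c + 1) : 3 ∣ Module.finrank ℚ_[2] E := by
  have hdeg : (X ^ 3 - C 3 * X - C 1 : ℚ_[2][X]).natDegree = 3 := by compute_degree!
  have hmon : (X ^ 3 - C 3 * X - C 1 : ℚ_[2][X]).Monic := by monicity!
  have h := minpoly.eq_of_irreducible_of_monic cub_irr (x := c) (by
    simp only [map_sub, map_mul, map_pow, aeval_X, aeval_C, map_ofNat, map_one]
    linear_combination hc) hmon
  have h2 := minpoly.degree_dvd (K := ℚ_[2]) (x := c) (IsIntegral.of_finite _ _)
  rwa [← h, hdeg] at h2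

theorem dvd4 {E : Type*} [Field E] [Algebra ℚ_[2] E] [FiniteDimensional ℚ_[2] E] (θ : E)
    (hθ : θ ^ 4 - 8 * θ + 12 = 0) : 4 ∣ Module.finrank ℚ_[2] E := by
  have : CharZero E := charZero_of_injective_algebraMap (algebraMap ℚ_[2] E).injective
  set g := (X ^ 4 + C 2 * X ^ 3 + C 6 * X ^ 2 + C 4 * X + C 2 : ℚ_[2][X]) with hg
  have hdeg : g.natDegree = 4 := by rw [hg]; compute_degree!
  have hmon : g.Monic := by rw [hg]; monicity!
  set u : E := θ ^ 2 / 2 - 1 with hu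
  have hu4 : u ^ 4 + 4 * u ^ 3 + 12 * u ^ 2 + 8 * u + 8 = 0 := by
    rw [hu]; field_simp
    linear_combination (θ ^ 4 + 8 * θ + 12) * hθ
  have hu0 : u ≠ 0 := by
    intro h; rw [h] at hu4; norm_num at hu4
  have h := minpoly.eq_of_irreducible_of_monic eis_irrQ (x := 2 / u) (by
    simp only [map_add, map_mul, map_pow, aeval_X, aeval_C, map_ofNat]
    field_simp
    linear_combination 2 * hu4) hmon
  have h2 := minpoly.degree_dvd (K := ℚ_[2]) (x := 2 / u) (IsIntegral.of_finite _ _)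
  rwa [← h, hdeg] at h2

end A4Q2

namespace A4Q2
open Polynomial

/-- The quartic whose splitting field is the extension. -/
noncomputable def qu : ℚ_[2][X] := X ^ 4 - C 8 * X + C 12

theorem qu_ne : qu ≠ 0 := by
  have : qu.Monic := by unfold qu; monicity!
  exact this.ne_zero

theorem mem_qu {L : Type*} [Field L] [Algebra ℚ_[2] L] (x : L) :
    x ∈ qu.rootSet L ↔ x ^ 4 - 8 * x + 12 = 0 := by
  rw [mem_rootSet_of_ne qu_ne]
  simp only [qu, map_add, map_sub, map_mul, map_pow, aeval_X, aeval_C, map_ofNat]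

theorem factor {L : Type*} [Field L] (d₁ d₂ d₃ : L) (h1 : d₁ ^ 2 + d₂ ^ 2 + d₃ ^ 2 = 0)
    (h2 : d₁ ^ 2 * d₂ ^ 2 + d₂ ^ 2 * d₃ ^ 2 + d₃ ^ 2 * d₁ ^ 2 = -3) (h3 : d₁ * d₂ * d₃ = 1) (x : L) :
    x ^ 4 - 8 * x + 12 = (x - (d₁ + d₂ + d₃)) * (x - (d₁ - d₂ - d₃)) * (x - (-d₁ + d₂ - d₃)) *
      (x - (-d₁ - d₂ + d₃)) := by
  linear_combination (2 * x ^ 2 - (d₁ ^ 2 + d₂ ^ 2 + d₃ ^ 2)) * h1 + 4 * h2 + 8 * x * h3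

theorem rootSet_eq {L : Type*} [Field L] [Algebra ℚ_[2] L] (d₁ d₂ d₃ : L)
    (h1 : d₁ ^ 2 + d₂ ^ 2 + d₃ ^ 2 = 0)
    (h2 : d₁ ^ 2 * d₂ ^ 2 + d₂ ^ 2 * d₃ ^ 2 + d₃ ^ 2 * d₁ ^ 2 = -3) (h3 : d₁ * d₂ * d₃ = 1) :
    qu.rootSet L = {d₁ + d₂ + d₃, d₁ - d₂ - d₃, -d₁ + d₂ - d₃, -d₁ - d₂ + d₃} := by
  ext x
  rw [mem_qu, factor d₁ d₂ d₃ h1 h2 h3]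
  simp only [mul_eq_zero, sub_eq_zero, Set.mem_insert_iff, Set.mem_singleton_iff, or_assoc]

theorem le_of {L : Type*} [Field L] [Algebra ℚ_[2] L] (E : IntermediateField ℚ_[2] L)
    [FiniteDimensional ℚ_[2] E] [IsGalois ℚ_[2] E]
    (φ : (E ≃ₐ[ℚ_[2]] E) ≃* alternatingGroup (Fin 4)) :
    IntermediateField.adjoin ℚ_[2] (qu.rootSet L) ≤ E := by
  obtain ⟨d₁, d₂, d₃, h1, h2, h3⟩ := exists_d φ
  rw [IntermediateField.adjoin_le_iff, rootSet_eq (d₁ : L) d₂ d₃ (by exact_mod_cast h1)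
    (by
      have h2' := congrArg (algebraMap E L) h2
      simp only [map_add, map_mul, map_pow, map_neg, map_ofNat] at h2'
      exact h2') (by exact_mod_cast h3)]
  rintro x (rfl | rfl | rfl | rfl)
  · exact (d₁ + d₂ + d₃).2
  · exact (d₁ - d₂ - d₃).2
  · exact (-d₁ + d₂ - d₃).2
  · exact (-d₁ - d₂ + d₃).2

theorem card_A4 : Nat.card (alternatingGroup (Fin 4)) = 12 := by
  rw [nat_card_alternatingGroup]; simp [Nat.factorial]

theorem exists_c (Ω : Type*) [Field Ω] [IsAlgClosed Ω] [CharZero Ω] :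
    ∃ d₁ d₂ d₃ : Ω, d₁ ^ 2 + d₂ ^ 2 + d₃ ^ 2 = 0 ∧
      d₁ ^ 2 * d₂ ^ 2 + d₂ ^ 2 * d₃ ^ 2 + d₃ ^ 2 * d₁ ^ 2 = -3 ∧ d₁ * d₂ * d₃ = 1 ∧
      (d₁ ^ 2) ^ 3 = 3 * d₁ ^ 2 + 1 ∧ d₂ ^ 2 = 2 - (d₁ ^ 2) ^ 2 ∧
      d₃ ^ 2 = (d₁ ^ 2) ^ 2 - d₁ ^ 2 - 2 := by
  obtain ⟨c, hc⟩ : ∃ c : Ω, c ^ 3 = 3 * c + 1 := by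
    obtain ⟨c, hc⟩ := IsAlgClosed.exists_root (X ^ 3 - C 3 * X - C 1 : Polynomial Ω) (by
      have : (X ^ 3 - C 3 * X - C 1 : Polynomial Ω).degree = 3 := by compute_degree!
      rw [this]; norm_num)
    refine ⟨c, ?_⟩
    simp at hc
    linear_combination hc
  obtain ⟨d₁, hd₁⟩ := IsAlgClosed.exists_pow_nat_eq c (n := 2) two_pos
  obtain ⟨d₂, hd₂⟩ := IsAlgClosed.exists_pow_nat_eq (2 - c ^ 2) (n := 2) two_pos
  have hp : c * (2 - c ^ 2) * (c ^ 2 - c - 2) = 1 := by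
    linear_combination (-c ^ 2 + c + 1) * hc
  have hc0 : c * (2 - c ^ 2) ≠ 0 := left_ne_zero_of_mul_eq_one hp
  have h12 : d₁ * d₂ ≠ 0 := by
    intro h
    apply hc0
    have : c * (2 - c ^ 2) = (d₁ * d₂) ^ 2 := by rw [mul_pow, hd₁, hd₂]
    rw [this, h]; simp
  have hd₃ : (d₁ * d₂)⁻¹ ^ 2 = c ^ 2 - c - 2 := by
    rw [inv_pow, mul_pow, hd₁, hd₂]
    exact inv_eq_of_mul_eq_one_right hp
  refine ⟨d₁, d₂, (d₁ * d₂)⁻¹, ?_, ?_, mul_inv_cancel₀ h12, ?_, ?_, ?_⟩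
  · rw [hd₁, hd₂, hd₃]; ring
  · rw [hd₁, hd₂, hd₃]; linear_combination (-c + 1) * hc
  · rw [hd₁, hc]
  · rw [hd₁, hd₂]
  · rw [hd₁, hd₃]

end A4Q2

namespace A4Q2
open Polynomial

theorem no_swap {L : Type*} [Field L] [CharZero L] (φ : L →+* L) (d₁ d₂ d₃ : L)
    (hd₂ : d₂ ^ 2 = 2 - (d₁ ^ 2) ^ 2)
    (hne : d₂ ^ 2 ≠ d₃ ^ 2)
    (s1 : φ (d₁ + d₂ + d₃) = d₁ - d₂ - d₃) (s2 : φ (d₁ - d₂ - d₃) = d₁ + d₂ + d₃)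
    (s3 : φ (-d₁ + d₂ - d₃) = -d₁ + d₂ - d₃) : False := by
  simp only [map_add, map_sub, map_neg] at s1 s2 s3
  have h1 : φ d₁ = d₁ := by
    apply mul_left_cancel₀ (two_ne_zero (α := L)); linear_combination s1 + s2
  have h2 : φ d₂ = -d₃ := by
    apply mul_left_cancel₀ (two_ne_zero (α := L)); linear_combination s1 + s3
  have h4 := congrArg φ hd₂
  simp only [map_sub, map_pow, map_ofNat, h1, h2] at h4
  apply hne
  rw [hd₂, ← h4]; ring

theorem exist (Ω : Type) [Field Ω] [Algebra ℚ_[2] Ω] [IsAlgClosure ℚ_[2] Ω] :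
    FiniteDimensional ℚ_[2] (IntermediateField.adjoin ℚ_[2] (qu.rootSet Ω)) ∧
    IsGalois ℚ_[2] (IntermediateField.adjoin ℚ_[2] (qu.rootSet Ω)) ∧
      Nonempty ((IntermediateField.adjoin ℚ_[2] (qu.rootSet Ω) ≃ₐ[ℚ_[2]]
        IntermediateField.adjoin ℚ_[2] (qu.rootSet Ω)) ≃* alternatingGroup (Fin 4)) := by
  classical
  have : CharZero Ω := charZero_of_injective_algebraMap (algebraMap ℚ_[2] Ω).injective
  have : IsAlgClosed Ω := IsAlgClosure.isAlgClosed ℚ_[2]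
  have : Algebra.IsAlgebraic ℚ_[2] Ω := IsAlgClosure.isAlgebraic
  have : Normal ℚ_[2] Ω := IsAlgClosure.normal _ _
  have hsp : (qu.map (algebraMap ℚ_[2] Ω)).Splits := IsAlgClosed.splits _
  have : Fact (qu.map (algebraMap ℚ_[2] Ω)).Splits := ⟨hsp⟩
  set E := IntermediateField.adjoin ℚ_[2] (qu.rootSet Ω) with hE
  have hspl : qu.IsSplittingField ℚ_[2] E := IntermediateField.adjoin_rootSet_isSplittingField hsp
  have hfin : FiniteDimensional ℚ_[2] E := IsSplittingField.finiteDimensional E qu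
  have hnorm : Normal ℚ_[2] E := Normal.of_isSplittingField qu
  have hgal : IsGalois ℚ_[2] E := ⟨⟩
  refine ⟨hfin, hgal, ?_⟩
  obtain ⟨d₁, d₂, d₃, h1, h2, h3, hc, hd₂, hd₃⟩ := exists_c Ω
  have hroots := rootSet_eq d₁ d₂ d₃ h1 h2 h3
  have hcn : ∀ y, algebraMap ℚ_[2] Ω y ≠ d₁ ^ 2 := by
    intro y hy
    rw [← hy] at hc
    apply no_root_cubic (-y)
    apply (algebraMap ℚ_[2] Ω).injective
    simp only [map_add, map_sub, map_neg, map_mul, map_pow, map_ofNat, map_one, map_zero]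
    linear_combination -hc
  have three : (3 : Ω) ≠ 0 := three_ne_zero
  have n12 : d₁ ^ 2 ≠ d₂ ^ 2 := by
    intro h
    rw [hd₂] at h
    exact three (by linear_combination (d₁ ^ 2 - 1) * h - hc)
  have n23 : d₂ ^ 2 ≠ d₃ ^ 2 := by
    intro h
    rw [hd₂, hd₃] at h
    exact three (by linear_combination (1 - (d₁ ^ 2) ^ 2) * h - (2 * d₁ ^ 2 - 1) * hc)
  have n31 : d₃ ^ 2 ≠ d₁ ^ 2 := by
    intro h
    rw [hd₃] at h
    exact three (by linear_combination ((d₁ ^ 2) ^ 2 - d₁ ^ 2 - 3) * h - (d₁ ^ 2 - 3) * hc)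
  have hsq : ∀ x y : Ω, x + y = 0 → x ^ 2 = y ^ 2 := fun x y h => by
    linear_combination (x - y) * h
  have hsq' : ∀ x y : Ω, x - y = 0 → x ^ 2 = y ^ 2 := fun x y h => by
    linear_combination (x + y) * h
  have two : (2 : Ω) ≠ 0 := two_ne_zero
  have t12 : d₁ + d₂ + d₃ ≠ d₁ - d₂ - d₃ := fun h => n23 (hsq _ _ (by
    apply mul_left_cancel₀ two; linear_combination h))
  have t13 : d₁ + d₂ + d₃ ≠ -d₁ + d₂ - d₃ := fun h => n31 (hsq _ _ (by
    apply mul_left_cancel₀ two; linear_combination h))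
  have t14 : d₁ + d₂ + d₃ ≠ -d₁ - d₂ + d₃ := fun h => n12 (hsq _ _ (by
    apply mul_left_cancel₀ two; linear_combination h))
  have t23 : d₁ - d₂ - d₃ ≠ -d₁ + d₂ - d₃ := fun h => n12 (hsq' _ _ (by
    apply mul_left_cancel₀ two; linear_combination h))
  have t24 : d₁ - d₂ - d₃ ≠ -d₁ - d₂ + d₃ := fun h => n31 (hsq' _ _ (by
    apply mul_left_cancel₀ two; linear_combination -h))
  have t34 : -d₁ + d₂ - d₃ ≠ -d₁ - d₂ + d₃ := fun h => n23 (hsq' _ _ (by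
    apply mul_left_cancel₀ two; linear_combination h))
  have hcard : Nat.card (qu.rootSet Ω) = 4 := by
    rw [Nat.card_coe_set_eq, hroots, Set.ncard_insert_of_notMem, Set.ncard_insert_of_notMem,
      Set.ncard_pair t34] <;>
    simp only [Set.mem_insert_iff, Set.mem_singleton_iff, not_or] <;> tauto
  have r1 : d₁ + d₂ + d₃ ∈ qu.rootSet Ω := by rw [hroots]; simp
  have r2 : d₁ - d₂ - d₃ ∈ qu.rootSet Ω := by rw [hroots]; simp
  have r3 : -d₁ + d₂ - d₃ ∈ qu.rootSet Ω := by rw [hroots]; simp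
  have i1 : d₁ + d₂ + d₃ ∈ E := IntermediateField.subset_adjoin _ _ r1
  have i2 : d₁ - d₂ - d₃ ∈ E := IntermediateField.subset_adjoin _ _ r2
  have id1 : d₁ ∈ E := by
    have : d₁ = 2⁻¹ * ((d₁ + d₂ + d₃) + (d₁ - d₂ - d₃)) := by
      field_simp; ring
    rw [this]
    exact E.mul_mem (E.inv_mem (ofNat_mem E 2)) (E.add_mem i1 i2)
  have dvd12 : 12 ∣ Module.finrank ℚ_[2] E := by
    have a3 : 3 ∣ Module.finrank ℚ_[2] E := dvd3 ((⟨d₁, id1⟩ : E) ^ 2) (by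
      apply Subtype.ext
      exact hc)
    have a4 : 4 ∣ Module.finrank ℚ_[2] E := dvd4 (⟨_, i1⟩ : E) (by
      apply Subtype.ext
      have := (mem_qu _).1 r1
      exact this)
    omega
  let ψ : (E ≃ₐ[ℚ_[2]] E) ≃* qu.Gal := AlgEquiv.autCongr (IsSplittingField.algEquiv E qu)
  let H := (Gal.galActionHom qu Ω).range
  let ψ' : qu.Gal ≃* H := MonoidHom.ofInjective (Gal.galActionHom_injective qu Ω)
  have cH : Nat.card H = Module.finrank ℚ_[2] E := by
    rw [← IsGalois.card_aut_eq_finrank]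
    exact Nat.card_congr (ψ.trans ψ').symm.toEquiv
  have cP : Nat.card (Equiv.Perm (qu.rootSet Ω)) = 24 := by
    rw [Nat.card_perm, hcard]; rfl
  have hidx : H.index = 2 := by
    have hmul := H.card_mul_index
    rw [cP, cH] at hmul
    obtain ⟨k, hk⟩ := dvd12
    have hH : H.index ≠ 1 := by
      intro hH
      rw [Subgroup.index_eq_one] at hH
      have hmem : Equiv.swap (⟨_, r1⟩ : qu.rootSet Ω) ⟨_, r2⟩ ∈ H := by rw [hH]; trivial
      obtain ⟨g, hg⟩ := hmem
      obtain ⟨φ, rfl⟩ := Gal.restrict_surjective qu Ω g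
      have key : ∀ x : qu.rootSet Ω, φ x = (Equiv.swap (⟨_, r1⟩ : qu.rootSet Ω) ⟨_, r2⟩ x : Ω) := by
        intro x
        rw [← hg, Gal.galActionHom_restrict]
      refine no_swap (φ : Ω →+* Ω) d₁ d₂ d₃ hd₂ n23 ?_ ?_ ?_
      · have := key ⟨_, r1⟩
        rwa [Equiv.swap_apply_left] at this
      · have := key ⟨_, r2⟩
        rwa [Equiv.swap_apply_right] at this
      · have := key ⟨_, r3⟩
        rwa [Equiv.swap_apply_of_ne_of_ne (by simpa using t13.symm) (by simpa using t23.symm)]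
          at this
    rw [hk] at hmul
    have h2 : k * H.index = 2 := by
      apply Nat.eq_of_mul_eq_mul_left (show 0 < 12 by norm_num); linarith
    have h3 := (Nat.dvd_prime Nat.prime_two).1 (Dvd.intro_left _ h2)
    tauto
  have hA : H = alternatingGroup (qu.rootSet Ω) := Equiv.Perm.eq_alternatingGroup_of_index_eq_two hidx
  have e : qu.rootSet Ω ≃ Fin 4 := by
    apply Fintype.equivFinOfCardEq
    rw [← Nat.card_eq_fintype_card, hcard]
  exact ⟨((ψ.trans ψ').trans (MulEquiv.subgroupCongr hA)).trans e.altCongrHom⟩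

theorem final (Ω : Type) [Field Ω] [Algebra ℚ_[2] Ω] [IsAlgClosure ℚ_[2] Ω] :
    ∃! E : IntermediateField ℚ_[2] Ω, FiniteDimensional ℚ_[2] ↥E ∧ IsGalois ℚ_[2] ↥E ∧
      Nonempty ((↥E ≃ₐ[ℚ_[2]] ↥E) ≃* alternatingGroup (Fin 4)) := by
  refine ⟨_, exist Ω, ?_⟩
  rintro E ⟨hf, hg, ⟨φ⟩⟩
  obtain ⟨hf', hg', ⟨φ'⟩⟩ := exist Ω
  symm
  apply IntermediateField.eq_of_le_of_finrank_eq (le_of E φ)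
  rw [← IsGalois.card_aut_eq_finrank, ← IsGalois.card_aut_eq_finrank, Nat.card_congr φ.toEquiv,
    Nat.card_congr φ'.toEquiv]

end A4Q2


/-- There is exactly one finite Galois extension of `ℚ_2` inside a fixed algebraic
closure `Ω` whose Galois group is isomorphic to the alternating group `A₄`. -/
theorem stmt_14 (Ω : Type) [Field Ω] [Algebra ℚ_[2] Ω] [IsAlgClosure ℚ_[2] Ω] :
    ∃! E : IntermediateField ℚ_[2] Ω, FiniteDimensional ℚ_[2] ↥E ∧ IsGalois ℚ_[2] ↥E ∧
      Nonempty ((↥E ≃ₐ[ℚ_[2]] ↥E) ≃* alternatingGroup (Fin 4)) := by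
  exact A4Q2.final Ω
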